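/- arXiv:1801.05121 — 2 statements merged into one kernel-verified Lean document; each statement's English description precedes it below -/
import Mathlib

section
/- Let Q be a generator-stationary random element of S. Suppose max(β/√n, 1/n) < 1. Then for every integer i ≥ 3, every κ > β and every κ̃ ∈ (max(β/√n, 1/n), 1): E[Q_i] ≤ (1/(β(1 − κ̃)))·(12 + 6κ̃/(κ̃ − β/√n))·(1/(κ̃ − 1/n))·(2κ + (1/β)·(12 + 6κ/(κ − β))). -/
open MeasureTheory

/-- Membership in the state space `S`: coordinates are at most `n`, the sequence is
non-increasing, and only finitely many coordinates are non-zero (finite total mass).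
Here `q i` represents the paper's `Q_{i+1}`. -/
def InS (n : ℕ) (q : ℕ → ℕ) : Prop :=
  (∀ i, q i ≤ n) ∧ (∀ i, q (i + 1) ≤ q i) ∧ (Function.support q).Finite

/-- The JSQ generator `G_Q` acting on a test function `f`.  The index `j` corresponds to
the paper's index `i = j + 1`; for `j = 0` the condition `∀ k < 0, q k = n` is vacuous, so
the first summand is the paper's `n λ 1(q_1 < n)(f(q+e^{(1)}) - f(q))` term, and the
summands `j ≥ 1` are the paper's arrival terms for `i ≥ 2`.  The second sum contains the
departure terms. -/
noncomputable def jsqGen (n : ℕ) (lam : ℝ) (f : (ℕ → ℕ) → ℝ) (q : ℕ → ℕ) : ℝ :=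
  (∑' j : ℕ, (n * lam) * (if (∀ k < j, q k = n) ∧ q j < n then (1 : ℝ) else 0) *
      (f (Function.update q j (q j + 1)) - f q)) +
  ∑' j : ℕ, ((q j : ℝ) - (q (j + 1) : ℝ)) * (f (Function.update q j (q j - 1)) - f q)

/-- A random element `Q` of `S` is generator-stationary if for every test function `f`
with `E|f(Q)| < ∞`, the expectation `E[G_Q f(Q)]` is well defined and equals `0`. -/
def GeneratorStationary {Ωp : Type*} [MeasurableSpace Ωp] (μ : Measure Ωp)
    (n : ℕ) (lam : ℝ) (Q : Ωp → ℕ → ℕ) : Prop :=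
  ∀ f : (ℕ → ℕ) → ℝ, Integrable (fun ω => f (Q ω)) μ →
    Integrable (fun ω => jsqGen n lam f (Q ω)) μ ∧
      (∫ ω, jsqGen n lam f (Q ω) ∂μ) = 0

lemma aux_int {Ωp : Type*} [MeasurableSpace Ωp] (μ : Measure Ωp)
    [IsProbabilityMeasure μ] (n : ℕ) (Q : Ωp → ℕ → ℕ) (hQmeas : Measurable Q)
    (hQS : ∀ ω, InS n (Q ω)) (H : ℕ → ℕ → ℕ → ℝ) (a b c : ℕ) :
    Integrable (fun ω => H (Q ω a) (Q ω b) (Q ω c)) μ := by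
  have hm : Measurable (fun ω => H (Q ω a) (Q ω b) (Q ω c)) := by
    have h1 : Measurable (fun ω => (Q ω a, Q ω b, Q ω c)) := by fun_prop
    have h2 : Measurable (fun p : ℕ × ℕ × ℕ => H p.1 p.2.1 p.2.2) := measurable_of_countable _
    exact h2.comp h1
  refine Integrable.of_bound hm.aestronglyMeasurable
    (∑ i ∈ Finset.range (n+1), ∑ j ∈ Finset.range (n+1), ∑ k ∈ Finset.range (n+1), |H i j k|) ?_
  refine Filter.Eventually.of_forall fun ω => ?_
  have ha := (hQS ω).1 a
  have hb := (hQS ω).1 b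
  have hc := (hQS ω).1 c
  rw [Real.norm_eq_abs]
  calc |H (Q ω a) (Q ω b) (Q ω c)| ≤ ∑ k ∈ Finset.range (n+1), |H (Q ω a) (Q ω b) k| :=
        Finset.single_le_sum (f := fun k => |H (Q ω a) (Q ω b) k|)
          (fun _ _ => abs_nonneg _) (Finset.mem_range.2 (by omega))
    _ ≤ ∑ j ∈ Finset.range (n+1), ∑ k ∈ Finset.range (n+1), |H (Q ω a) j k| :=
        Finset.single_le_sum (f := fun j => ∑ k ∈ Finset.range (n+1), |H (Q ω a) j k|)
          (fun _ _ => Finset.sum_nonneg fun _ _ => abs_nonneg _) (Finset.mem_range.2 (by omega))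
    _ ≤ _ :=
        Finset.single_le_sum
          (f := fun i => ∑ j ∈ Finset.range (n+1), ∑ k ∈ Finset.range (n+1), |H i j k|)
          (fun _ _ => Finset.sum_nonneg fun _ _ => Finset.sum_nonneg fun _ _ => abs_nonneg _)
          (Finset.mem_range.2 (by omega))

lemma gen_coord (n : ℕ) (lam : ℝ) (q : ℕ → ℕ) (hq : InS n q) (m : ℕ) :
    jsqGen n lam (fun q => (q m : ℝ)) q =
      n * lam * (if (∀ k < m, q k = n) ∧ q m < n then (1 : ℝ) else 0)
        - ((q m : ℝ) - q (m+1)) := by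
  unfold jsqGen
  rw [tsum_eq_single m, tsum_eq_single m]
  · simp only [Function.update_self]
    rcases Nat.eq_zero_or_pos (q m) with h | h
    · have := hq.2.1 m
      have h2 : q (m+1) = 0 := by omega
      simp [h, h2]
    · rw [Nat.cast_sub (by omega : 1 ≤ q m)]
      push_cast
      ring
  · intro j hj
    simp [Function.update_of_ne (Ne.symm hj)]
  · intro j hj
    simp [Function.update_of_ne (Ne.symm hj)]

lemma gen_two (n : ℕ) (lam : ℝ) (q : ℕ → ℕ) (F : ℕ → ℕ → ℝ) :
    jsqGen n lam (fun q => F (q 0) (q 1)) q =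
      n * lam * (if q 0 < n then (1 : ℝ) else 0) * (F (q 0 + 1) (q 1) - F (q 0) (q 1))
      + n * lam * (if q 0 = n ∧ q 1 < n then (1 : ℝ) else 0) * (F (q 0) (q 1 + 1) - F (q 0) (q 1))
      + (((q 0 : ℝ) - q 1) * (F (q 0 - 1) (q 1) - F (q 0) (q 1))
      + ((q 1 : ℝ) - q 2) * (F (q 0) (q 1 - 1) - F (q 0) (q 1))) := by
  unfold jsqGen
  rw [tsum_eq_sum (s := Finset.range 2), tsum_eq_sum (s := Finset.range 2)]
  · simp [Finset.sum_range_succ, Function.update_of_ne]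
  · intro j hj
    have h0 : (0:ℕ) ≠ j := by rintro rfl; simp at hj
    have h1 : (1:ℕ) ≠ j := by rintro rfl; simp at hj
    simp [Function.update_of_ne h0, Function.update_of_ne h1]
  · intro j hj
    have h0 : (0:ℕ) ≠ j := by rintro rfl; simp at hj
    have h1 : (1:ℕ) ≠ j := by rintro rfl; simp at hj
    simp [Function.update_of_ne h0, Function.update_of_ne h1]

lemma ind_sum (n : ℕ) (q : ℕ → ℕ) (hq : InS n q) (J : ℕ) :
    ∑ j ∈ Finset.range J, (if (∀ k < j + 2, q k = n) ∧ q (j + 2) < n then (1 : ℝ) else 0)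
      = (if q 0 = n ∧ q 1 = n then (1:ℝ) else 0) - (if (∀ k < J + 2, q k = n) then 1 else 0) := by
  induction J with
  | zero =>
    have : (∀ k < 0 + 2, q k = n) ↔ (q 0 = n ∧ q 1 = n) := by
      constructor
      · intro h; exact ⟨h 0 (by omega), h 1 (by omega)⟩
      · rintro ⟨h0, h1⟩ k hk
        interval_cases k <;> assumption
    rw [Finset.sum_range_zero]
    simp only [this, sub_self]
  | succ J ih =>
    rw [Finset.sum_range_succ, ih]
    have hle := hq.1 (J+2)
    have e : (∀ k < J + 1 + 2, q k = n) ↔ ((∀ k < J + 2, q k = n) ∧ q (J+2) = n) := by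
      constructor
      · intro h; exact ⟨fun k hk => h k (by omega), h _ (by omega)⟩
      · rintro ⟨h0, h1⟩ k hk
        rcases Nat.lt_or_ge k (J+2) with h | h
        · exact h0 k h
        · have : k = J + 2 := by omega
          rw [this, h1]
    simp only [e]
    by_cases h1 : ∀ k < J + 2, q k = n
    · by_cases h2 : q (J+2) = n
      · simp [h1, h2]
      · have : q (J+2) < n := by omega
        simp [h1, h2, this]
    · simp [h1]

lemma EQ3_le {Ωp : Type*} [MeasurableSpace Ωp] (μ : Measure Ωp)
    [IsProbabilityMeasure μ] (n : ℕ) (lam : ℝ) (hl : 0 ≤ lam)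
    (Q : Ωp → ℕ → ℕ) (hQmeas : Measurable Q)
    (hQS : ∀ ω, InS n (Q ω)) (hstat : GeneratorStationary μ n lam Q) :
    ∫ ω, (Q ω 2 : ℝ) ∂μ ≤
      n * lam * ∫ ω, (if Q ω 0 = n ∧ Q ω 1 = n then (1:ℝ) else 0) ∂μ := by
  have hI := fun m => aux_int μ n Q hQmeas hQS (fun x _ _ => (x:ℝ)) m m m
  have hInd := aux_int μ n Q hQmeas hQS (fun x y _ => if x = n ∧ y = n then (1:ℝ) else 0) 0 1 0
  set P := ∫ ω, (if Q ω 0 = n ∧ Q ω 1 = n then (1:ℝ) else 0) ∂μ with hP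
  have key : ∀ J : ℕ, ∫ ω, (Q ω 2 : ℝ) ∂μ - ∫ ω, (Q ω (J+2) : ℝ) ∂μ ≤ n * lam * P := by
    intro J
    have h0 : ∫ ω, ∑ j ∈ Finset.range J, jsqGen n lam (fun q => (q (j+2) : ℝ)) (Q ω) ∂μ = 0 := by
      rw [integral_finsetSum _ (fun j _ => (hstat (fun q => (q (j+2) : ℝ)) (hI _)).1)]
      exact Finset.sum_eq_zero (fun j _ => (hstat (fun q => (q (j+2) : ℝ)) (hI _)).2)
    have hsumInt : Integrable (fun ω => ∑ j ∈ Finset.range J,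
        jsqGen n lam (fun q => (q (j+2) : ℝ)) (Q ω)) μ :=
      integrable_finsetSum _ (fun j _ => (hstat (fun q => (q (j+2) : ℝ)) (hI _)).1)
    have hle : ∫ ω, ∑ j ∈ Finset.range J, jsqGen n lam (fun q => (q (j+2) : ℝ)) (Q ω) ∂μ ≤
        ∫ ω, (n * lam * (if Q ω 0 = n ∧ Q ω 1 = n then (1:ℝ) else 0)
          - ((Q ω 2 : ℝ) - (Q ω (J+2) : ℝ))) ∂μ := by
      refine integral_mono hsumInt ((hInd.const_mul _).sub ((hI 2).sub (hI (J+2)))) fun ω => ?_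
      have := ind_sum n (Q ω) (hQS ω) J
      simp only [gen_coord n lam (Q ω) (hQS ω)]
      rw [Finset.sum_sub_distrib, ← Finset.mul_sum, this]
      have ht : ∑ j ∈ Finset.range J, ((Q ω (j+2) : ℝ) - Q ω (j+2+1)) = Q ω 2 - Q ω (J+2) := by
        have := Finset.sum_range_sub' (fun j => (Q ω (j+2) : ℝ)) J
        simp only [zero_add] at this
        rw [← this]
      rw [ht]
      have hnl : 0 ≤ (n:ℝ) * lam := by positivity
      have : (0:ℝ) ≤ if (∀ k < J + 2, Q ω k = n) then 1 else 0 := by split_ifs <;> norm_num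
      nlinarith [mul_nonneg hnl this]
    have j1 : Integrable (fun ω => (Q ω 2 : ℝ) - (Q ω (J+2) : ℝ)) μ := (hI 2).sub (hI (J+2))
    rw [h0, integral_sub (hInd.const_mul _) j1, integral_const_mul] at hle
    rw [integral_sub (hI 2) (hI (J+2))] at hle
    linarith
  have hlim : Filter.Tendsto (fun J : ℕ => ∫ ω, (Q ω (J+2) : ℝ) ∂μ) Filter.atTop (nhds 0) := by
    have := tendsto_integral_of_dominated_convergence (μ := μ)
      (F := fun (J:ℕ) ω => (Q ω (J+2) : ℝ)) (f := fun _ => 0) (fun _ => (n:ℝ))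
      (fun J => (hI (J+2)).aestronglyMeasurable) (integrable_const _)
      (fun J => Filter.Eventually.of_forall fun ω => by
        rw [Real.norm_eq_abs, abs_of_nonneg (by positivity)]
        exact_mod_cast (hQS ω).1 (J+2))
      (Filter.Eventually.of_forall fun ω => by
        refine tendsto_const_nhds.congr' ?_
        obtain ⟨B, hB⟩ := (hQS ω).2.2.bddAbove
        filter_upwards [Filter.eventually_gt_atTop B] with J hJ
        by_contra hne
        have : J + 2 ∈ Function.support (Q ω) := by
          intro h0; apply hne; simp [h0]
        have := hB this
        omega)
    simpa using this
  have := le_of_tendsto (tendsto_const_nhds.sub hlim) (Filter.Eventually.of_forall key)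
  simpa using this

lemma pt_bound (n : ℕ) (lam k : ℝ) (hl : 0 ≤ lam) (hl1 : lam ≤ 1) (hk : n * (1 - lam) < k)
    (hk0 : 0 < k)
    (x y z : ℕ) (hxn : x ≤ n) (hyx : y ≤ x) (hzy : z ≤ y) (c : ℝ)
    (hc : c = 1 + k / (k - n * (1 - lam))) (φ ψ g : ℕ → ℝ) (F : ℕ → ℕ → ℝ)
    (hφ : φ = fun y : ℕ => max ((y:ℝ) - k) 0)
    (hψ : ψ = fun y : ℕ => if k ≤ (y:ℝ) then 1 else 0)
    (hg : ∀ y, g (y+1) = g y + φ y)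
    (hF : F = fun (x y : ℕ) => g y - ((n:ℝ) - (x:ℝ)) * φ y + c / 2 * (((n:ℝ) - (x:ℝ))^2 * ψ y)) :
    n * lam * (if x < n then (1 : ℝ) else 0) * (F (x + 1) y - F x y)
      + n * lam * (if x = n ∧ y < n then (1 : ℝ) else 0) * (F x (y + 1) - F x y)
      + (((x : ℝ) - y) * (F (x - 1) y - F x y)
      + ((y : ℝ) - z) * (F x (y - 1) - F x y)) ≤
    -(n * (1 - lam)) * φ y + n * (1 + c) * ψ y
      + φ n * ((z:ℝ) - n * lam * (if x = n ∧ y = n then (1:ℝ) else 0)) := by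
  set b0 : ℝ := n * (1 - lam) with hb0
  have hkb : 0 < k - b0 := by linarith
  have hb0n : 0 ≤ b0 := mul_nonneg (by positivity) (by linarith)
  have hc1 : 1 ≤ c := by rw [hc]; linarith [div_nonneg hk0.le hkb.le]
  have hxn' : (x:ℝ) ≤ n := by exact_mod_cast hxn
  have hyx' : (y:ℝ) ≤ x := by exact_mod_cast hyx
  have hzy' : (z:ℝ) ≤ y := by exact_mod_cast hzy
  have hz0 : (0:ℝ) ≤ z := by positivity
  have hnl : 0 ≤ (n:ℝ) * lam := by positivity
  have hφ0 : ∀ y, 0 ≤ φ y := fun y => by rw [hφ]; exact le_max_right _ _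
  have hψ0 : ∀ y, 0 ≤ ψ y := fun y => by rw [hψ]; dsimp; split_ifs <;> norm_num
  have hφm : Monotone φ := by
    intro a b hab
    rw [hφ]; dsimp
    have : (a:ℝ) ≤ b := by exact_mod_cast hab
    exact max_le_max (by linarith) le_rfl
  have hψm : ψ (y-1) ≤ ψ y := by
    rw [hψ]; dsimp
    have : ((y-1:ℕ):ℝ) ≤ y := by exact_mod_cast Nat.sub_le _ _
    split_ifs <;> first | (exfalso; linarith) | norm_num
  have hΔ : φ y - φ (y-1) ≤ ψ y := by
    rw [hφ, hψ]; dsimp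
    have h1 : (y:ℝ) ≤ ((y-1:ℕ):ℝ) + 1 := by exact_mod_cast (by omega : y ≤ y - 1 + 1)
    split_ifs with h
    · rw [max_eq_left (by linarith)]
      linarith [le_max_left (((y-1:ℕ):ℝ) - k) 0]
    · rw [max_eq_right (by linarith)]
      linarith [le_max_right (((y-1:ℕ):ℝ) - k) 0]
  have hφψ : φ y ≤ (y - b0) * ψ y := by
    rw [hφ, hψ]; dsimp
    split_ifs with h
    · rw [max_eq_left (by linarith)]; linarith
    · rw [max_eq_right (by linarith)]; simp
  have hyψ : y * ψ y ≤ (k / (k - b0)) * ((y - b0) * ψ y) := by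
    rw [hψ]; dsimp
    split_ifs with h
    · rw [div_mul_eq_mul_div, le_div_iff₀ hkb]
      nlinarith
    · simp
  -- exact arrival/departure terms
  have e1 : n * lam * (if x < n then (1 : ℝ) else 0) * (F (x + 1) y - F x y) =
      n * lam * (1 - (if x = n then (1:ℝ) else 0)) *
        (φ y + c / 2 * ((1 - 2 * ((n:ℝ) - x)) * ψ y)) := by
    rcases hxn.lt_or_eq with h | h
    · rw [if_pos h, if_neg h.ne, hF]; push_cast; ring
    · simp [h]
  have e2 : n * lam * (if x = n ∧ y < n then (1 : ℝ) else 0) * (F x (y + 1) - F x y) =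
      n * lam * ((if x = n then (1:ℝ) else 0) * φ y
        - (if x = n ∧ y = n then (1:ℝ) else 0) * φ n) := by
    by_cases h : x = n
    · by_cases h2 : y = n
      · simp [h, h2]
      · have : y < n := by omega
        rw [if_pos ⟨h, this⟩, if_pos h, if_neg (by tauto), hF]
        dsimp only
        rw [hg, h]; ring
    · simp [h]
  have e3 : ((x : ℝ) - y) * (F (x - 1) y - F x y) =
      ((x : ℝ) - y) * (- φ y + c / 2 * ((1 + 2 * ((n:ℝ) - x)) * ψ y)) := by
    rcases Nat.eq_zero_or_pos x with h | h
    · have : y = 0 := by omega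
      simp [h, this]
    · rw [hF]; dsimp only; rw [Nat.cast_sub (by omega : 1 ≤ x)]; push_cast; ring
  have e4 : ((y : ℝ) - z) * (F x (y - 1) - F x y) =
      ((y : ℝ) - z) * (-φ (y-1) + ((n:ℝ) - x) * (φ y - φ (y-1))
        + c / 2 * (((n:ℝ) - x)^2 * (ψ (y-1) - ψ y))) := by
    rcases Nat.eq_zero_or_pos y with h | h
    · have : z = 0 := by omega
      simp [h, this]
    · obtain ⟨w, rfl⟩ : ∃ w, y = w + 1 := ⟨y - 1, by omega⟩
      rw [hF]; dsimp only; simp only [Nat.add_sub_cancel]; rw [hg]; ring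
  rw [e1, e2, e3, e4]
  have hn_ : (n:ℝ) * lam = n - b0 := by rw [hb0]; ring
  obtain ⟨a, ha⟩ : ∃ a, a = (n:ℝ) - x := ⟨_, rfl⟩
  have ha0 : 0 ≤ a := by linarith
  have hx : (x:ℝ) = n - a := by linarith
  -- the quadratic part
  have ei : (if x = n then (1:ℝ) else 0) * a = 0 := by
    split_ifs with h
    · rw [ha, h]; simp
    · simp
  have ei0 : 0 ≤ (if x = n then (1:ℝ) else 0) := by split_ifs <;> norm_num
  generalize (if x = n then (1:ℝ) else 0) = ι at *
  generalize (if x = n ∧ y = n then (1:ℝ) else 0) = ι2 at *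
  have h3 : φ (y-1) ≤ φ n := hφm (by omega)
  have hlam_n : n * lam ≤ n := by linarith
  have hy0 : (0:ℝ) ≤ y := by positivity
  have t1 : ((y : ℝ) - z) * (c / 2 * (a^2 * (ψ (y-1) - ψ y))) ≤ 0 := by
    apply mul_nonpos_of_nonneg_of_nonpos (by linarith)
    apply mul_nonpos_of_nonneg_of_nonpos (by linarith)
    apply mul_nonpos_of_nonneg_of_nonpos (by positivity) (by linarith)
  have t2 : ((y : ℝ) - z) * (a * (φ y - φ (y-1))) ≤ y * (a * ψ y) := by
    have hd : 0 ≤ φ y - φ (y-1) := by linarith [hφm (Nat.sub_le y 1)]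
    apply mul_le_mul (by linarith) (mul_le_mul_of_nonneg_left hΔ ha0) (mul_nonneg ha0 hd) hy0
  have t3 : a * φ y ≤ a * ((y - b0) * ψ y) := mul_le_mul_of_nonneg_left hφψ ha0
  have t4 : a * (y * ψ y) ≤ a * ((c - 1) * ((y - b0) * ψ y)) := by
    rw [hc, add_sub_cancel_left]
    exact mul_le_mul_of_nonneg_left hyψ ha0
  have t5 : (z:ℝ) * φ (y-1) ≤ z * φ n := mul_le_mul_of_nonneg_left h3 hz0
  have t6 : y * (φ y - φ (y-1)) ≤ n * ψ y :=
    (mul_le_mul_of_nonneg_left hΔ hy0).trans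
      (mul_le_mul_of_nonneg_right (by linarith) (hψ0 y))
  have t7 : n * lam * (1 - ι) * (c / 2 * ((1 - 2 * a) * ψ y)) ≤
      (n * lam) * (c / 2 * ((1 - 2 * a) * ψ y)) := by
    have : n * lam * (1 - ι) * (c / 2 * ((1 - 2 * a) * ψ y)) =
      (n * lam) * (c / 2 * ((1 - 2 * a) * ψ y)) - n * lam * (c / 2) * ψ y * ι
        + n * lam * c * ψ y * (ι * a) := by ring
    rw [this, ei]
    have : 0 ≤ n * lam * (c / 2) * ψ y * ι :=
      mul_nonneg (mul_nonneg (mul_nonneg hnl (by linarith)) (hψ0 y)) ei0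
    linarith
  have t8 : (n * lam) * (c / 2 * ((1 - 2 * a) * ψ y)) +
      (n - a - y) * (c / 2 * ((1 + 2 * a) * ψ y)) ≤
      c * (n * ψ y) - c * (a * ((y - b0) * ψ y)) := by
    have : (n * lam) * (c / 2 * ((1 - 2 * a) * ψ y)) +
      (n - a - y) * (c / 2 * ((1 + 2 * a) * ψ y)) =
      c * (n * ψ y) - c * (a * ((y - b0) * ψ y)) -
        c * ψ y * (b0 / 2 + a / 2 + y / 2 + a^2) := by
      rw [hn_]; ring
    rw [this]
    have : 0 ≤ c * ψ y * (b0 / 2 + a / 2 + y / 2 + a^2) :=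
      mul_nonneg (mul_nonneg (by linarith) (hψ0 y)) (by positivity)
    linarith
  rw [← ha, hx]
  have hbl : (n:ℝ) * lam * φ y = n * φ y - b0 * φ y := by rw [hn_]; ring
  linear_combination t1 + t2 + t3 + t4 + t5 + t6 + t7 + t8 + hbl

lemma key_bound {Ωp : Type*} [MeasurableSpace Ωp] (μ : Measure Ωp)
    [IsProbabilityMeasure μ] (n : ℕ) (lam k : ℝ) (hl : 0 ≤ lam) (hl1 : lam ≤ 1)
    (hk : n * (1 - lam) < k) (hk0 : 0 < k)
    (Q : Ωp → ℕ → ℕ) (hQmeas : Measurable Q)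
    (hQS : ∀ ω, InS n (Q ω)) (hstat : GeneratorStationary μ n lam Q) :
    n * (1 - lam) * ∫ ω, max ((Q ω 1 : ℝ) - k) 0 ∂μ ≤
      n * (2 + k / (k - n * (1 - lam))) * ∫ ω, (if k ≤ (Q ω 1 : ℝ) then (1:ℝ) else 0) ∂μ := by
  obtain ⟨c, hc⟩ : ∃ c, c = 1 + k / (k - n * (1 - lam)) := ⟨_, rfl⟩
  obtain ⟨φ, hφ⟩ : ∃ φ, φ = fun y : ℕ => max ((y:ℝ) - k) 0 := ⟨_, rfl⟩
  obtain ⟨ψ, hψ⟩ : ∃ ψ : ℕ → ℝ, ψ = fun y : ℕ => if k ≤ (y:ℝ) then 1 else 0 := ⟨_, rfl⟩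
  obtain ⟨g, hg⟩ : ∃ g : ℕ → ℝ, ∀ y, g (y+1) = g y + φ y :=
    ⟨fun y => ∑ i ∈ Finset.range y, φ i, fun y => Finset.sum_range_succ _ _⟩
  obtain ⟨F, hF⟩ : ∃ F : ℕ → ℕ → ℝ,
    F = fun (x y : ℕ) => g y - ((n:ℝ) - (x:ℝ)) * φ y + c / 2 * (((n:ℝ) - (x:ℝ))^2 * ψ y) := ⟨_, rfl⟩
  obtain ⟨hi, h0⟩ := hstat (fun q => F (q 0) (q 1))
    (aux_int μ n Q hQmeas hQS (fun x y _ => F x y) 0 1 0)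
  have i1 := aux_int μ n Q hQmeas hQS (fun _ y _ => φ y) 0 1 2
  have i2 := aux_int μ n Q hQmeas hQS (fun _ y _ => ψ y) 0 1 2
  have i3 := aux_int μ n Q hQmeas hQS (fun _ _ z => (z:ℝ)) 0 1 2
  have i4 := aux_int μ n Q hQmeas hQS (fun x y _ => if x = n ∧ y = n then (1:ℝ) else 0) 0 1 2
  have hle : ∫ ω, jsqGen n lam (fun q => F (q 0) (q 1)) (Q ω) ∂μ ≤
      ∫ ω, (-(n * (1 - lam)) * φ (Q ω 1) + n * (1 + c) * ψ (Q ω 1)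
      + φ n * ((Q ω 2:ℝ) - n * lam * (if Q ω 0 = n ∧ Q ω 1 = n then (1:ℝ) else 0))) ∂μ := by
    refine integral_mono hi (((i1.const_mul _).add (i2.const_mul _)).add
      ((i3.sub (i4.const_mul _)).const_mul _)) fun ω => ?_
    dsimp only
    rw [gen_two]
    exact pt_bound n lam k hl hl1 hk hk0 _ _ _ ((hQS ω).1 0) ((hQS ω).2.1 0) ((hQS ω).2.1 1)
      c hc φ ψ g F hφ hψ hg hF
  have j1 : Integrable (fun ω => -(n * (1 - lam)) * φ (Q ω 1) + n * (1 + c) * ψ (Q ω 1)) μ :=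
    (i1.const_mul _).add (i2.const_mul _)
  have j2 : Integrable (fun ω => (Q ω 2:ℝ) -
      n * lam * (if Q ω 0 = n ∧ Q ω 1 = n then (1:ℝ) else 0)) μ := i3.sub (i4.const_mul _)
  rw [h0, integral_add j1 (j2.const_mul _),
    integral_add (i1.const_mul _) (i2.const_mul _), integral_const_mul, integral_const_mul,
    integral_const_mul, integral_sub i3 (i4.const_mul _), integral_const_mul] at hle
  have hE := EQ3_le μ n lam hl Q hQmeas hQS hstat
  have hφn : 0 ≤ φ n := by rw [hφ]; exact le_max_right _ _
  have := mul_nonneg hφn (sub_nonneg.2 hE)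
  have e1 : ∫ ω, max ((Q ω 1 : ℝ) - k) 0 ∂μ = ∫ ω, φ (Q ω 1) ∂μ := by rw [hφ]
  have e2 : ∫ ω, (if k ≤ (Q ω 1 : ℝ) then (1:ℝ) else 0) ∂μ = ∫ ω, ψ (Q ω 1) ∂μ := by rw [hψ]
  rw [e1, e2, show 2 + k / (k - n * (1 - lam)) = 1 + c by rw [hc]; ring]
  nlinarith

/-- in the Halfin-Whitt regime `λ = 1 - β/√n`, for a generator-stationary
`Q`, if `max(β/√n, 1/n) < 1` then for every `i ≥ 3` (here `Q ω (i-1)` is the paper's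
`Q_i`), every `κ > β` and every `κ̃ ∈ (max(β/√n, 1/n), 1)`:
`E[Q_i] ≤ (1/(β(1-κ̃)))(12 + 6κ̃/(κ̃ - β/√n))·(1/(κ̃ - 1/n))·(2κ + (1/β)(12 + 6κ/(κ-β)))`. -/
theorem stmt2 {Ωp : Type*} [MeasurableSpace Ωp] (μ : Measure Ωp)
    [IsProbabilityMeasure μ] (n : ℕ) (hn : 1 ≤ n) (β : ℝ) (hβ : 0 < β)
    (hlam : 0 < 1 - β / Real.sqrt n)
    (Q : Ωp → ℕ → ℕ) (hQmeas : Measurable Q) (hQS : ∀ ω, InS n (Q ω))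
    (hstat : GeneratorStationary μ n (1 - β / Real.sqrt n) Q)
    (hmax : max (β / Real.sqrt n) (1 / (n : ℝ)) < 1) :
    ∀ i : ℕ, 3 ≤ i → ∀ κ : ℝ, β < κ →
      ∀ κt : ℝ, max (β / Real.sqrt n) (1 / (n : ℝ)) < κt → κt < 1 →
        (∫ ω, (Q ω (i - 1) : ℝ) ∂μ) ≤
          1 / (β * (1 - κt)) * (12 + 6 * κt / (κt - β / Real.sqrt n)) *
            (1 / (κt - 1 / n)) *
              (2 * κ + 1 / β * (12 + 6 * κ / (κ - β))) := by
  intro i hi κ hκ κt hκt hκt1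
  have hn0 : (0:ℝ) < n := by exact_mod_cast hn
  obtain ⟨s, hs⟩ : ∃ s, s = Real.sqrt n := ⟨_, rfl⟩
  have hs0 : 0 < s := by rw [hs]; exact Real.sqrt_pos.2 hn0
  have hss : s * s = n := by rw [hs]; exact Real.mul_self_sqrt hn0.le
  rw [← hs] at hlam hstat hmax hκt ⊢
  have hβt : β / s < κt := lt_of_le_of_lt (le_max_left _ _) hκt
  have hnt : 1 / (n:ℝ) < κt := lt_of_le_of_lt (le_max_right _ _) hκt
  have hκt0 : 0 < κt := lt_trans (by positivity) hnt
  have hκ0 : 0 < κ := hβ.trans hκ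
  have hb : (n:ℝ) * (1 - (1 - β / s)) = β * s := by rw [← hss]; field_simp; ring
  have hbs : 0 ≤ β / s := by positivity
  have i1 := aux_int μ n Q hQmeas hQS (fun _ y _ => (y:ℝ)) 0 1 2
  have i3 := aux_int μ n Q hQmeas hQS (fun _ _ z => (z:ℝ)) 0 1 2
  have i4 := aux_int μ n Q hQmeas hQS (fun x y _ => if x = n ∧ y = n then (1:ℝ) else 0) 0 1 2
  have iφ := fun k : ℝ => aux_int μ n Q hQmeas hQS (fun _ y _ => max ((y:ℝ) - k) 0) 0 1 2
  have iψ := fun k : ℝ => aux_int μ n Q hQmeas hQS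
    (fun _ y _ => if k ≤ (y:ℝ) then (1:ℝ) else 0) 0 1 2
  -- step 1
  have k1 := key_bound μ n (1 - β / s) (κ * s) hlam.le (by linarith)
    (by rw [hb]; exact mul_lt_mul_of_pos_right hκ hs0) (by positivity) Q hQmeas hQS hstat
  have k2 := key_bound μ n (1 - β / s) (κt * n) hlam.le (by linarith)
    (by rw [hb, ← hss]; rw [div_lt_iff₀ hs0] at hβt; nlinarith) (by positivity) Q hQmeas hQS hstat
  rw [hb] at k1 k2
  have r1 : κ * s / (κ * s - β * s) = κ / (κ - β) := by
    rw [← sub_mul, mul_div_mul_right _ _ hs0.ne']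
  have r2 : κt * n / (κt * n - β * s) = κt / (κt - β / s) := by
    have : β * s = β / s * n := by rw [← hss]; field_simp
    rw [this, ← sub_mul, mul_div_mul_right _ _ hn0.ne']
  rw [r1] at k1
  rw [r2] at k2
  set A := κ / (κ - β) with hA
  set B := κt / (κt - β / s) with hB
  have hA0 : 0 ≤ A := div_nonneg hκ0.le (by linarith)
  have hB0 : 0 ≤ B := div_nonneg hκt0.le (by linarith)
  have p1 : ∫ ω, (if κ * s ≤ (Q ω 1 : ℝ) then (1:ℝ) else 0) ∂μ ≤ 1 := by
    have := integral_mono (iψ (κ * s)) (integrable_const (1:ℝ)) (fun ω => by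
      dsimp only; split_ifs <;> norm_num)
    simpa using this
  have eQ : ∫ ω, (Q ω 1 : ℝ) ∂μ ≤ κ * s + ∫ ω, max ((Q ω 1 : ℝ) - κ * s) 0 ∂μ := by
    have := integral_mono i1 ((integrable_const (κ * s)).add (iφ (κ * s))) (fun ω => by
      simp only [Pi.add_apply]; linarith [le_max_left ((Q ω 1 : ℝ) - κ * s) 0])
    rw [integral_add' (integrable_const (κ * s)) (iφ (κ * s))] at this
    simpa using this
  obtain ⟨R, hR⟩ : ∃ R, R = 2 * κ + 1 / β * (12 + 6 * κ / (κ - β)) := ⟨_, rfl⟩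
  have hR' : β * R = 2 * κ * β + (12 + 6 * A) := by rw [hR, hA]; field_simp
  have hR0 : 0 ≤ R := by
    have : 0 ≤ β * R := by rw [hR']; positivity
    exact nonneg_of_mul_nonneg_right this hβ
  have eQ2 : ∫ ω, (Q ω 1 : ℝ) ∂μ ≤ s * R := by
    have h1 : β * s * ∫ ω, max ((Q ω 1 : ℝ) - κ * s) 0 ∂μ ≤ n * (2 + A) :=
      k1.trans (mul_le_of_le_one_right (by positivity) p1)
    have h2 : β * s * ∫ ω, (Q ω 1 : ℝ) ∂μ ≤ β * s * (s * R) := by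
      have := mul_le_mul_of_nonneg_left eQ (by positivity : 0 ≤ β * s)
      have e : β * s * (s * R) = n * (2 * κ * β + (12 + 6 * A)) := by
        rw [← hR', ← hss]; ring
      have e' : β * s * (κ * s) = n * (κ * β) := by rw [← hss]; ring
      rw [e]
      have : 0 ≤ n * (κ * β) := by positivity
      have : 0 ≤ n * A := by positivity
      nlinarith
    exact le_of_mul_le_mul_left h2 (by positivity)
  -- step 2
  set P := ∫ ω, (if Q ω 0 = n ∧ Q ω 1 = n then (1:ℝ) else 0) ∂μ with hP
  have hP0 : 0 ≤ P := integral_nonneg fun ω => by dsimp only; split_ifs <;> norm_num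
  have m1 : n * (1 - κt) * P ≤ ∫ ω, max ((Q ω 1 : ℝ) - κt * n) 0 ∂μ := by
    rw [hP, ← integral_const_mul]
    refine integral_mono (i4.const_mul _) (iφ _) fun ω => ?_
    dsimp only
    split_ifs with h
    · rw [h.2]; refine le_trans (le_of_eq ?_) (le_max_left _ _); ring
    · simp
  set P2 := ∫ ω, (if κt * n ≤ (Q ω 1 : ℝ) then (1:ℝ) else 0) ∂μ with hP2
  have m2 : κt * n * P2 ≤ s * R := by
    refine le_trans ?_ eQ2
    rw [hP2, ← integral_const_mul]
    refine integral_mono ((iψ _).const_mul _) i1 fun ω => ?_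
    dsimp only
    split_ifs with h
    · linarith
    · simp
  have hE := EQ3_le μ n (1 - β / s) hlam.le Q hQmeas hQS hstat
  have hmono : ∫ ω, (Q ω (i - 1) : ℝ) ∂μ ≤ ∫ ω, (Q ω 2 : ℝ) ∂μ := by
    refine integral_mono (aux_int μ n Q hQmeas hQS (fun x _ _ => (x:ℝ)) (i-1) 0 0) i3 fun ω => ?_
    have := antitone_nat_of_succ_le (hQS ω).2.1 (by omega : 2 ≤ i - 1)
    dsimp only
    exact_mod_cast this
  have hX : ∫ ω, (Q ω (i - 1) : ℝ) ∂μ ≤ n * P := by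
    refine hmono.trans (hE.trans ?_)
    exact mul_le_mul_of_nonneg_right (mul_le_of_le_one_right hn0.le (by linarith)) hP0
  have h1t : 0 < 1 - κt := by linarith
  have fin1 : n * P ≤ 1 / (β * (1 - κt)) * (2 + B) * (1 / κt) * R := by
    have a1 : β * s * (n * (1 - κt) * P) ≤ n * (2 + B) * P2 :=
      (mul_le_mul_of_nonneg_left m1 (by positivity)).trans k2
    have a2 : (n * (2 + B)) * (κt * n * P2) ≤ (n * (2 + B)) * (s * R) :=
      mul_le_mul_of_nonneg_left m2 (by positivity)
    have a3 : (κt * n) * (β * s * (n * (1 - κt) * P)) ≤ (κt * n) * (n * (2 + B) * P2) :=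
      mul_le_mul_of_nonneg_left a1 (by positivity)
    have a4 : (n * s) * ((n * P) * (β * (1 - κt) * κt)) ≤ (n * s) * ((2 + B) * R) := by linarith
    have a5 := le_of_mul_le_mul_left a4 (by positivity)
    have : 1 / (β * (1 - κt)) * (2 + B) * (1 / κt) * R = (2 + B) * R / (β * (1 - κt) * κt) := by
      field_simp
    rw [this, le_div_iff₀ (by positivity)]
    exact a5
  refine hX.trans (fin1.trans ?_)
  rw [← hR]
  have hB6 : 6 * κt / (κt - β / s) = 6 * B := by rw [hB]; ring
  rw [hB6]
  have hd : 0 < κt - 1 / n := by linarith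
  have hinv : 1 / κt ≤ 1 / (κt - 1 / n) :=
    one_div_le_one_div_of_le hd (by linarith [one_div_pos.2 hn0])
  gcongr
  · linarith
  · linarith
end

section
/- Fix κ > β. The function τ is differentiable at every point x ∈ Ω with x ≥ Γ^(κ) (with the derivative in x_1 understood as the left derivative when x_1 = 0), and its partial derivatives satisfy τ_1(x) = −e^{−τ(x)}/(x_2·e^{−τ(x)} − β/√n) ≤ 0 and τ_2(x) = τ_1(x)·τ(x) ≤ 0. -/
/-- `(ν, η)` solves the nonlinear system of Lemma `gamma` for initial value `x₁`. -/
def GammaSol (n : ℕ) (β κ x1 ν η : ℝ) : Prop :=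
  κ / Real.sqrt n ≤ ν ∧ 0 ≤ η ∧
    -(β / Real.sqrt n) + (x1 + β / Real.sqrt n) * Real.exp (-η) +
        η * ν * Real.exp (-η) = 0 ∧
    ν * Real.exp (-η) = κ / Real.sqrt n

/-- `η` solves the hitting-time equation `β/√n - (x₁ + β/√n)e^{-η} - η x₂ e^{-η} = 0`. -/
def HitEq (n : ℕ) (β x1 x2 η : ℝ) : Prop :=
  β / Real.sqrt n - (x1 + β / Real.sqrt n) * Real.exp (-η) -
      η * x2 * Real.exp (-η) = 0

lemma hitEq_iff (n : ℕ) (β x1 x2 η : ℝ) : HitEq n β x1 x2 η ↔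
    β / Real.sqrt n * (Real.exp η - 1) - η * x2 = x1 := by
  unfold HitEq
  have h : Real.exp (-η) * Real.exp η = 1 := by rw [← Real.exp_add]; simp
  have hp := Real.exp_pos (-η)
  set b := β / Real.sqrt n
  constructor
  · intro H
    linear_combination (Real.exp η) * H + (x1 + b + η * x2) * h
  · intro H
    linear_combination (Real.exp (-η)) * H - b * h

/-- Tangent line bound for the exponential. -/
lemma exp_tangent (a c : ℝ) : Real.exp a + Real.exp a * (c - a) ≤ Real.exp c := by
  have h1 := Real.add_one_le_exp (c - a)
  have h2 : Real.exp c = Real.exp a * Real.exp (c - a) := by rw [← Real.exp_add]; congr 1; ring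
  rw [h2]
  nlinarith [Real.exp_pos a]

lemma hit_first (n : ℕ) (β x1 x2 η : ℝ) (hb : 0 < β / Real.sqrt n)
    (h : HitEq n β x1 x2 η) (hs : β / Real.sqrt n * Real.exp η < x2) :
    ∀ η' : ℝ, 0 ≤ η' → HitEq n β x1 x2 η' → η ≤ η' := by
  intro c _ hc
  rw [hitEq_iff] at h hc
  by_contra hlt
  push Not at hlt
  have h1 := mul_le_mul_of_nonneg_left (exp_tangent η c) hb.le
  have h2 := mul_pos (sub_pos.2 hs) (sub_pos.2 hlt)
  nlinarith

/-- A local inverse of a strictly differentiable function. -/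
lemma local_inv (g : ℝ → ℝ) (g' T : ℝ) (hg : HasStrictDerivAt g g' T) (h0 : g' ≠ 0) :
    ∃ φ : ℝ → ℝ, HasDerivAt φ g'⁻¹ (g T) ∧ φ (g T) = T ∧ ∀ᶠ y in nhds (g T), g (φ y) = y := by
  have hfd := hg.hasStrictFDerivAt_equiv h0
  exact ⟨hg.localInverse g g' T h0, (hg.to_localInverse h0).hasDerivAt,
    hfd.localInverse_apply_image, hfd.eventually_right_inverse⟩

/-- Lemma `tau`, part 2.  Fix `κ > β`, let `ν*` parametrize `Γ^{(κ)}` and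
let `τ` be the first hitting time: `τ(x)` is the smallest nonnegative solution of the
hitting-time equation wherever such a smallest solution exists (hypothesis `htau`).
Then `τ` is differentiable at every `x ∈ Ω` with `x ≥ Γ^{(κ)}` — the derivative in `x₁`
being the left (within `(-∞,0]`) derivative when `x₁ = 0` and the ordinary derivative
when `x₁ < 0` — with
`τ₁(x) = -e^{-τ(x)}/(x₂ e^{-τ(x)} - β/√n) ≤ 0` and `τ₂(x) = τ₁(x) τ(x) ≤ 0`. -/
theorem stmt8 (n : ℕ) (hn : 1 ≤ n) (β κ : ℝ) (hβ : 0 < β) (hκ : β < κ)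
    (νs : ℝ → ℝ)
    (hνs : ∀ x1 ≤ (0 : ℝ), ∃ η : ℝ, GammaSol n β κ x1 (νs x1) η)
    (tau : ℝ → ℝ → ℝ)
    (htau : ∀ x1 x2 η : ℝ, 0 ≤ η → HitEq n β x1 x2 η →
      (∀ η' : ℝ, 0 ≤ η' → HitEq n β x1 x2 η' → η ≤ η') → tau x1 x2 = η) :
    ∀ x1 ≤ (0 : ℝ), ∀ x2 : ℝ, νs x1 ≤ x2 →
      ∀ T T1 : ℝ, T = tau x1 x2 →
        T1 = -Real.exp (-T) / (x2 * Real.exp (-T) - β / Real.sqrt n) →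
        HasDerivWithinAt (fun t => tau t x2) T1 (Set.Iic 0) x1 ∧
        (x1 < 0 → HasDerivAt (fun t => tau t x2) T1 x1) ∧
        T1 ≤ 0 ∧
        HasDerivAt (fun t => tau x1 t) (T1 * T) x2 ∧
        T1 * T ≤ 0 := by
  intro x1 hx1 x2 hx2 T T1 hT hT1
  have hsn : 0 < Real.sqrt n := Real.sqrt_pos.2 (by exact_mod_cast hn)
  have hb : 0 < β / Real.sqrt n := div_pos hβ hsn
  have hbk : β / Real.sqrt n < κ / Real.sqrt n := div_lt_div_of_pos_right hκ hsn
  -- existence of the first root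
  obtain ⟨S, hS0, hSroot, hSs⟩ : ∃ S : ℝ, 0 ≤ S ∧ HitEq n β x1 x2 S ∧
      β / Real.sqrt n * Real.exp S < x2 := by
    obtain ⟨e, -, he0, heq, hk⟩ := hνs x1 hx1
    have heq' : HitEq n β x1 (νs x1) e := by unfold HitEq; linarith
    rw [hitEq_iff] at heq'
    have hνe : νs x1 = κ / Real.sqrt n * Real.exp e := by
      rw [← hk, mul_assoc, ← Real.exp_add]; simp
    have hcont : ContinuousOn (fun η : ℝ => β / Real.sqrt n * (Real.exp η - 1) - η * x2)
        (Set.Icc 0 e) := by fun_prop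
    have hmem : x1 ∈ Set.Icc ((fun η : ℝ => β / Real.sqrt n * (Real.exp η - 1) - η * x2) e)
        ((fun η : ℝ => β / Real.sqrt n * (Real.exp η - 1) - η * x2) 0) := by
      constructor
      · simp only
        nlinarith [mul_le_mul_of_nonneg_left hx2 he0]
      · simpa using hx1
    obtain ⟨S, hS, hSe⟩ := intermediate_value_Icc' he0 hcont hmem
    refine ⟨S, hS.1, (hitEq_iff ..).2 hSe, ?_⟩
    have h1 : Real.exp S ≤ Real.exp e := Real.exp_le_exp.2 hS.2
    have h2 := Real.exp_pos e
    calc β / Real.sqrt n * Real.exp S ≤ β / Real.sqrt n * Real.exp e :=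
          mul_le_mul_of_nonneg_left h1 hb.le
      _ < κ / Real.sqrt n * Real.exp e := mul_lt_mul_of_pos_right hbk h2
      _ ≤ x2 := hνe ▸ hx2
  have key : ∀ y z η : ℝ, 0 ≤ η → HitEq n β y z η → β / Real.sqrt n * Real.exp η < z →
      tau y z = η := fun y z η h0 h hs => htau y z η h0 h (hit_first n β y z η hb h hs)
  have hTS : T = S := hT.trans (key x1 x2 S hS0 hSroot hSs)
  subst hTS
  rw [hitEq_iff] at hSroot
  have hTau := hT
  clear hT
  set b := β / Real.sqrt n with hbdef
  have hne : b * Real.exp T - x2 ≠ 0 := by linarith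
  have hT1' : T1 = (b * Real.exp T - x2)⁻¹ := by
    have h : Real.exp (-T) * Real.exp T = 1 := by rw [← Real.exp_add]; simp
    have hfac : x2 * Real.exp (-T) - b = - (Real.exp (-T) * (b * Real.exp T - x2)) := by
      linear_combination (b) * h
    rw [hT1, hfac, neg_div_neg_eq, div_mul_eq_div_div, div_self (Real.exp_pos _).ne', one_div]
  have hT1neg : T1 ≤ 0 := by
    rw [hT1']; exact inv_nonpos.2 (by linarith)
  have hbx : b < x2 := by
    have := mul_le_mul_of_nonneg_left (Real.one_le_exp hS0) hb.le
    linarith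
  -- derivative in x1
  have hg : HasStrictDerivAt (fun η : ℝ => b * (Real.exp η - 1) - η * x2)
      (b * Real.exp T - x2) T := by
    have h1 : HasStrictDerivAt (fun η : ℝ => Real.exp η - 1) (Real.exp T) T :=
      (Real.hasStrictDerivAt_exp T).sub_const 1
    have h2 : HasStrictDerivAt (fun η : ℝ => η * x2) (1 * x2) T :=
      (hasStrictDerivAt_id T).mul_const x2
    have h3 : HasStrictDerivAt (fun η : ℝ => b * (Real.exp η - 1) - η * x2)
      (b * Real.exp T - 1 * x2) T := (h1.const_mul b).sub h2
    rwa [one_mul] at h3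
  obtain ⟨φ, hφd, hφT, hφr⟩ := local_inv _ _ _ hg hne
  simp only [hSroot] at hφd hφT hφr
  rw [← hT1'] at hφd
  have hev : ∀ᶠ y in nhds x1, y ≤ 0 → tau y x2 = φ y := by
    have hc : ∀ᶠ y in nhds x1, b * Real.exp (φ y) < x2 := by
      have hcc : ContinuousAt (fun y => b * Real.exp (φ y)) x1 :=
        continuousAt_const.mul (Real.continuous_exp.continuousAt.comp hφd.continuousAt)
      exact hcc.eventually_lt_const (by simpa [hφT] using hSs)
    filter_upwards [hφr, hc] with y hy1 hy2 hy0
    refine key y x2 (φ y) ?_ ((hitEq_iff ..).2 hy1) hy2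
    by_contra hneg
    push Not at hneg
    have h1 := mul_le_mul_of_nonneg_left (Real.add_one_le_exp (φ y)) hb.le
    nlinarith [mul_pos (sub_pos.2 hbx) (neg_pos.2 hneg)]
  refine ⟨?_, ?_, hT1neg, ?_, mul_nonpos_of_nonpos_of_nonneg hT1neg hS0⟩
  · refine hφd.hasDerivWithinAt.congr_of_eventuallyEq ?_ (hev.self_of_nhds hx1)
    filter_upwards [nhdsWithin_le_nhds hev, self_mem_nhdsWithin] with y hy hy0 using hy hy0
  · intro hlt
    refine hφd.congr_of_eventuallyEq ?_
    filter_upwards [hev, eventually_lt_nhds hlt] with y hy hy0 using hy hy0.le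
  · rcases hx1.eq_or_lt with h0 | hlt
    · have hz : ∀ t, tau x1 t = 0 := fun t =>
        htau x1 t 0 le_rfl ((hitEq_iff ..).2 (by simp [h0])) (fun _ h _ => h)
      have hT0 : T = 0 := hTau.trans (hz x2)
      have hfun : (fun t => tau x1 t) = fun _ => (0 : ℝ) := funext hz
      rw [hfun, hT0, mul_zero]
      exact hasDerivAt_const _ _
    · have hTpos : 0 < T := by
        rcases hS0.eq_or_lt with h | h
        · rw [← h] at hSroot; simp at hSroot; linarith
        · exact h
      have hh : HasStrictDerivAt (fun η : ℝ => (b * (Real.exp η - 1) - x1) / η)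
          ((b * Real.exp T - x2) / T) T := by
        have h1 : HasStrictDerivAt (fun η : ℝ => Real.exp η - 1) (Real.exp T) T :=
          (Real.hasStrictDerivAt_exp T).sub_const 1
        have h2 : HasStrictDerivAt (fun η : ℝ => b * (Real.exp η - 1) - x1) (b * Real.exp T) T :=
          (h1.const_mul b).sub_const x1
        have h3 : HasStrictDerivAt (fun η : ℝ => (b * (Real.exp η - 1) - x1) / η)
            ((b * Real.exp T * T - (b * (Real.exp T - 1) - x1) * 1) / T ^ 2) T :=
          h2.fun_div (hasStrictDerivAt_id T) hTpos.ne'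
        have h4 : (b * Real.exp T * T - (b * (Real.exp T - 1) - x1) * 1) / T ^ 2
            = (b * Real.exp T - x2) / T := by
          rw [div_eq_div_iff (pow_ne_zero 2 hTpos.ne') hTpos.ne']
          linear_combination (-T) * hSroot
        rwa [h4] at h3
      obtain ⟨ψ, hψd, hψT, hψr⟩ := local_inv _ _ _ hh (div_ne_zero hne hTpos.ne')
      have hval : (b * (Real.exp T - 1) - x1) / T = x2 := by
        rw [div_eq_iff hTpos.ne']; linarith
      simp only [hval] at hψd hψT hψr
      have hder : ((b * Real.exp T - x2) / T)⁻¹ = T1 * T := by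
        rw [hT1', inv_div, div_eq_mul_inv, mul_comm]
      rw [hder] at hψd
      refine hψd.congr_of_eventuallyEq ?_
      have hc : ∀ᶠ y in nhds x2, b * Real.exp (ψ y) < y := by
        have hcc : ContinuousAt (fun y => b * Real.exp (ψ y)) x2 :=
          continuousAt_const.mul (Real.continuous_exp.continuousAt.comp hψd.continuousAt)
        exact hcc.eventually_lt continuousAt_id (by simpa [hψT] using hSs)
      have hp : ∀ᶠ y in nhds x2, 0 < ψ y :=
        hψd.continuousAt.eventually_const_lt (by rwa [hψT])
      filter_upwards [hψr, hc, hp] with y h1 h2 h3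
      refine key x1 y (ψ y) h3.le ((hitEq_iff ..).2 ?_) h2
      rw [div_eq_iff h3.ne'] at h1
      linarith
end
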